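/- Let m, n be natural numbers, z ∈ ℝᵐ, and let g : ℝᵐ → ℝⁿ be differentiable at z with Fréchet derivative J (identified with its n × m matrix in the standard bases) and Lipschitz on some neighbourhood of z. Let ε = (ε₁, …, ε_m) be a bounded random vector on a probability space (Ω, P) with E[ε_j ε_k] = 1 if j = k and E[ε_j ε_k] = 0 if j ≠ k. Then lim_{σ → 0⁺} σ⁻² · E[‖g(z + σε) − g(z)‖₂²] = ‖J‖_F², where ‖J‖_F² = Σ_{i,j} J_{ij}² is the squared Frobenius norm. -/

import Mathlib

open MeasureTheory Filter

/-- Asymptotic form of Proposition 1: if `g` is differentiable at `z` with derivative `J`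
(identified with its matrix via `J_{ij} = (J e_j)_i`) and Lipschitz near `z`, and `ε` is a
bounded random vector with unit-variance uncorrelated components, then
`σ⁻² E[‖g(z + σε) − g(z)‖₂²] → ‖J‖_F²` as `σ → 0⁺`. -/
theorem small_noise_limit_frobenius
    {m n : ℕ} {Ω : Type*} [MeasurableSpace Ω] (P : Measure Ω) [IsProbabilityMeasure P]
    (z : Fin m → ℝ) (g : (Fin m → ℝ) → (Fin n → ℝ))
    (J : (Fin m → ℝ) →L[ℝ] (Fin n → ℝ))
    (hderiv : HasFDerivAt g J z)
    (hlip : ∃ (K : NNReal) (s : Set (Fin m → ℝ)), s ∈ nhds z ∧ LipschitzOnWith K g s)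
    (ε : Fin m → Ω → ℝ)
    (hmeas : ∀ j, Measurable (ε j))
    (hbdd : ∃ C : ℝ, ∀ j ω, |ε j ω| ≤ C)
    (hcov : ∀ j k, ∫ ω, ε j ω * ε k ω ∂P = if j = k then 1 else 0) :
    Tendsto
      (fun σ : ℝ =>
        (σ ^ 2)⁻¹ * ∫ ω, ∑ i, (g (fun j => z j + σ * ε j ω) i - g z i) ^ 2 ∂P)
      (nhdsWithin 0 (Set.Ioi 0))
      (nhds (∑ i, ∑ j, (J (Pi.single j 1) i) ^ 2)) := by
  obtain ⟨K, s, hs, hK⟩ := hlip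
  obtain ⟨C₀, hC₀⟩ := hbdd
  obtain ⟨C, hC0, hC⟩ : ∃ C : ℝ, 0 ≤ C ∧ ∀ j ω, |ε j ω| ≤ C :=
    ⟨max C₀ 0, le_max_right _ _, fun j ω => (hC₀ j ω).trans (le_max_left _ _)⟩
  obtain ⟨gExt, hgExt, heq⟩ := hK.extend_pi
  have hzs : z ∈ s := mem_of_mem_nhds hs
  have hnorm : ∀ ω, ‖fun j => ε j ω‖ ≤ C := fun ω =>
    (pi_norm_le_iff_of_nonneg hC0).2 fun j => hC j ω
  have hev : ∀ᶠ σ : ℝ in nhdsWithin 0 (Set.Ioi 0),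
      0 < σ ∧ ∀ ω, (fun j => z j + σ * ε j ω) ∈ s := by
    obtain ⟨r, hr, hrs⟩ := Metric.mem_nhds_iff.1 hs
    have h1 : Set.Ioo (0:ℝ) (r / (C + 1)) ∈ nhdsWithin (0:ℝ) (Set.Ioi 0) :=
      Ioo_mem_nhdsGT (by positivity)
    filter_upwards [h1] with σ hσ
    refine ⟨hσ.1, fun ω => hrs ?_⟩
    have hlt : σ * (C + 1) < r := (lt_div_iff₀ (by positivity)).1 hσ.2
    rw [Metric.mem_ball, dist_pi_lt_iff hr]
    intro j
    rw [Real.dist_eq, add_sub_cancel_left, abs_mul, abs_of_pos hσ.1]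
    have := mul_le_mul_of_nonneg_left (hC j ω) hσ.1.le
    nlinarith [hσ.1]
  have hJ : ∀ (v : Fin m → ℝ) i, J v i = ∑ j, v j * J (Pi.single j 1) i := by
    intro v i
    conv_lhs => rw [pi_eq_sum_univ' v]
    simp [map_sum, Finset.sum_apply, Pi.single_apply]
    try rfl
  have hint : ∀ j k, Integrable (fun ω => ε j ω * ε k ω) P := by
    intro j k
    refine Integrable.of_bound ((hmeas j).mul (hmeas k)).aestronglyMeasurable (C * C) ?_
    refine Eventually.of_forall fun ω => ?_
    rw [norm_mul]
    exact mul_le_mul (hC j ω) (hC k ω) (norm_nonneg _) hC0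
  have hlim : ∑ i, ∑ j, (J (Pi.single j 1) i) ^ 2
      = ∫ ω, ∑ i, (J (fun j => ε j ω) i) ^ 2 ∂P := by
    have hexp : ∀ ω, ∑ i, (J (fun j => ε j ω) i) ^ 2 = ∑ i, ∑ j, ∑ k,
        (J (Pi.single j 1) i * J (Pi.single k 1) i) * (ε j ω * ε k ω) := by
      intro ω
      refine Finset.sum_congr rfl fun i _ => ?_
      rw [hJ, sq, Finset.sum_mul_sum]
      refine Finset.sum_congr rfl fun j _ => Finset.sum_congr rfl fun k _ => ?_
      ring
    simp_rw [hexp]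
    rw [integral_finsetSum _ fun i _ => integrable_finsetSum _ fun j _ =>
      integrable_finsetSum _ fun k _ => (hint j k).const_mul _]
    refine Finset.sum_congr rfl fun i _ => ?_
    rw [integral_finsetSum _ fun j _ =>
      integrable_finsetSum _ fun k _ => (hint j k).const_mul _]
    refine Finset.sum_congr rfl fun j _ => ?_
    rw [integral_finsetSum _ fun k _ => (hint j k).const_mul _]
    simp [integral_const_mul, hcov, sq]
  rw [hlim]
  simp_rw [← integral_const_mul]
  refine tendsto_integral_filter_of_dominated_convergence
    (fun _ => ∑ _i : Fin n, (K * C) ^ 2) ?_ ?_ (integrable_const _) ?_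
  · filter_upwards [hev] with σ hσ
    have h2 : ∀ ω, g (fun j => z j + σ * ε j ω) = gExt (fun j => z j + σ * ε j ω) :=
      fun ω => heq (hσ.2 ω)
    simp_rw [h2]
    have h3 : Measurable fun ω => gExt (fun j => z j + σ * ε j ω) :=
      hgExt.continuous.measurable.comp
        (measurable_pi_lambda _ fun j => ((hmeas j).const_mul σ).const_add (z j))
    refine Measurable.aestronglyMeasurable (Measurable.const_mul ?_ _)
    refine Finset.measurable_fun_sum _ fun i _ => ?_
    exact (((measurable_pi_apply i).comp h3).sub_const _).pow_const 2
  · filter_upwards [hev] with σ hσ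
    refine Eventually.of_forall fun ω => ?_
    have hp := hσ.1
    rw [Real.norm_of_nonneg (by positivity), Finset.mul_sum]
    refine Finset.sum_le_sum fun i _ => ?_
    have h4 : |g (fun j => z j + σ * ε j ω) i - g z i| ≤ K * (σ * C) := by
      refine (dist_le_pi_dist (g (fun j => z j + σ * ε j ω)) (g z) i).trans ?_
      refine (hK.dist_le_mul _ (hσ.2 ω) _ hzs).trans ?_
      refine mul_le_mul_of_nonneg_left ?_ K.2
      refine (dist_pi_le_iff (by positivity)).2 fun j => ?_
      rw [Real.dist_eq, add_sub_cancel_left, abs_mul, abs_of_pos hp]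
      exact mul_le_mul_of_nonneg_left (hC j ω) hp.le
    rw [inv_mul_le_iff₀ (by positivity), ← sq_abs]
    calc _ ≤ (K * (σ * C)) ^ 2 := pow_le_pow_left₀ (abs_nonneg _) h4 2
      _ = _ := by ring
  · refine Eventually.of_forall fun ω => ?_
    have h5 := (hderiv.hasLineDerivAt (fun j => ε j ω)).tendsto_slope_zero_right
    rw [tendsto_pi_nhds] at h5
    have h6 := tendsto_finsetSum Finset.univ fun i _ => (h5 i).pow 2
    refine h6.congr fun σ => ?_
    rw [Finset.mul_sum]
    refine Finset.sum_congr rfl fun i _ => ?_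
    simp only [Pi.smul_apply, Pi.sub_apply, smul_eq_mul, mul_pow, inv_pow]
    rfl
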